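/- arXiv:1802.08436 — 2 statements merged into one kernel-verified Lean document; each statement's English description precedes it below -/
import Mathlib

section
/- Let F be a field of characteristic p > 0 with p-degree at most 1, let F ⊆ K be a finite purely inseparable field extension, and let L be a field containing K that is finitely generated over F and separable over K. Let E be a perfect closure of K. Then the local Artin ring L ⊗_F E has embedding dimension at most 1. -/
open scoped KaehlerDifferential TensorProduct

/-- A field extension `K ⊆ L` is separable (separably generated) if it admits a
transcendence basis `s` such that `L` is separable algebraic over `K(s)`. -/
def IsSeparablyGenerated (K L : Type*) [Field K] [Field L] [Algebra K L] : Prop :=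
  ∃ s : Set L, AlgebraicIndependent K ((↑) : s → L) ∧
    Algebra.IsSeparable (IntermediateField.adjoin K s) L

/-! Every element of `L ⊗[F] E` is a unit or nilpotent, because `E / F` is purely inseparable. So
the maximal ideal `m` is the kernel of the surjection onto the reduced ring `L ⊗[K] E`, that is, the
ideal generated by the kernel `I` of the multiplication `K ⊗[F] K → K`. Hence `m / m ^ 2` is spanned
by the image of `I / I ^ 2 = Ω[K⁄F]`, a quotient of `Ω[K⁄ℤ]`.

The dimension of `Ω[K⁄ℤ]` is at most that of `Ω[F⁄ℤ]`: adjoining to `F` a purely inseparable `α`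
with `α ^ p ^ (k + 1) = a` and `a` not a `p`-th power creates at most the one new differential
`dα`, but it kills `da`, which is nonzero in `Ω[F⁄ℤ]`. -/

section SeparablyGenerated

theorem isDomain_tensorProduct_of_isFractionRing {k A C : Type*} (B : Type*) [Field k]
    [CommRing A] [CommRing B] [CommRing C] [Nontrivial C] [Algebra k A] [Algebra k B] [Algebra A B]
    [IsScalarTower k A B] [Algebra k C] [IsFractionRing A B] [IsDomain (A ⊗[k] C)] :
    IsDomain (B ⊗[k] C) := by
  have hle : Algebra.algebraMapSubmonoid (A ⊗[k] C) (nonZeroDivisors A) ≤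
      nonZeroDivisors (A ⊗[k] C) :=
    Submonoid.map_le_of_le_comap _ <| nonZeroDivisors_le_comap_nonZeroDivisors_of_injective
      (algebraMap A (A ⊗[k] C))
      (Algebra.TensorProduct.includeLeft_injective (S := A) (algebraMap k C).injective)
  have : IsDomain ((A ⊗[k] C) ⊗[A] B) := IsLocalization.isDomain_of_le_nonZeroDivisors _ hle
  let e := (Algebra.TensorProduct.cancelBaseChange k A A B C).toMulEquiv
  exact (e.symm.trans (Algebra.TensorProduct.comm A B _).toMulEquiv).isDomain

open scoped IntermediateField.algebraAdjoinAdjoin in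
theorem isDomain_adjoin_tensorProduct_of_algebraicIndependent {K L : Type*} (E : Type*) [Field K]
    [Field L] [CommRing E] [IsDomain E] [Algebra K L] [Algebra K E] {s : Set L}
    (hs : AlgebraicIndependent K ((↑) : s → L)) :
    IsDomain (IntermediateField.adjoin K s ⊗[K] E) := by
  let e : MvPolynomial s K ≃ₐ[K] Algebra.adjoin K s :=
    hs.aevalEquiv.trans (Subalgebra.equivOfEq _ _ (by simp))
  let e' : Algebra.adjoin K s ⊗[K] E ≃ₐ[K] MvPolynomial s E :=
    (Algebra.TensorProduct.comm K _ _).trans <| (Algebra.TensorProduct.congr .refl e.symm).trans <|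
      (MvPolynomial.algebraTensorAlgEquiv K E).restrictScalars K
  have : IsDomain (Algebra.adjoin K s ⊗[K] E) := e'.toMulEquiv.isDomain
  exact isDomain_tensorProduct_of_isFractionRing (A := Algebra.adjoin K s) _

theorem isReduced_tensorProduct_of_isSeparable (M N L : Type*) [Field M] [Field N] [Field L]
    [Algebra M N] [Algebra M L] [Algebra.IsSeparable M L] : IsReduced (N ⊗[M] L) := by
  refine .tensorProduct_of_flat_of_forall_fg fun B hB ↦ ?_
  obtain ⟨S, rfl⟩ := subalgebraEquivIntermediateField.symm.surjective B
  change IsReduced (N ⊗[M] S)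
  have : Algebra.FiniteType M S := S.toSubalgebra.fg_iff_finiteType.1 hB
  have : Algebra.FormallyUnramified M S := .of_isSeparable M S
  exact Algebra.FormallyUnramified.isReduced_of_field N (N ⊗[M] S)

theorem isReduced_tensorProduct_of_isSeparable_of_isDomain (M L D : Type*) [Field M] [Field L]
    [CommRing D] [IsDomain D] [Algebra M L] [Algebra M D] [Algebra.IsSeparable M L] :
    IsReduced (L ⊗[M] D) := by
  have := isReduced_tensorProduct_of_isSeparable M (FractionRing D) L
  let f : D →ₐ[M] FractionRing D := IsScalarTower.toAlgHom M D _
  let g := Algebra.TensorProduct.map f (.id M L)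
  have hg : Function.Injective g :=
    Module.Flat.rTensor_preserves_injective_linearMap f.toLinearMap (IsFractionRing.injective D _)
  let e := Algebra.TensorProduct.comm M L D
  exact isReduced_of_injective (g.comp e.toAlgHom) (hg.comp e.injective)

theorem isReduced_tensorProduct_of_isSeparable_of_isDomain_tensorProduct (K M L E : Type*)
    [CommRing K] [Field M] [Field L] [CommRing E] [Algebra K M] [Algebra M L] [Algebra K L]
    [IsScalarTower K M L] [Algebra K E] [Algebra.IsSeparable M L] [IsDomain (M ⊗[K] E)] :
    IsReduced (L ⊗[K] E) := by
  have := isReduced_tensorProduct_of_isSeparable_of_isDomain M L (M ⊗[K] E)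
  let e := Algebra.TensorProduct.cancelBaseChange K M M L E
  exact isReduced_of_injective e.symm e.symm.injective

theorem IsSeparablyGenerated.isReduced_tensorProduct {K L : Type*} (E : Type*) [Field K] [Field L]
    [Algebra K L] [CommRing E] [IsDomain E] [Algebra K E] (h : IsSeparablyGenerated K L) :
    IsReduced (L ⊗[K] E) := by
  obtain ⟨s, hs, _⟩ := h
  have := isDomain_adjoin_tensorProduct_of_algebraicIndependent E hs
  exact isReduced_tensorProduct_of_isSeparable_of_isDomain_tensorProduct K
    (IntermediateField.adjoin K s) L E

end SeparablyGenerated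

section LocalRing

open IsLocalRing

theorem isUnit_or_isNilpotent_tensorProduct_of_isPurelyInseparable {k L E : Type*} [Field k]
    [Field L] [Field E] [Algebra k L] [Algebra k E] [IsPurelyInseparable k E] (x : L ⊗[k] E) :
    IsUnit x ∨ IsNilpotent x := by
  obtain ⟨n, hn, y, hy⟩ := IsPurelyInseparable.exists_pow_mem_range_tensorProduct x
  rcases eq_or_ne y 0 with rfl | hy0
  · exact .inr ⟨n, by rw [← hy, map_zero]⟩
  · exact .inl ((isUnit_pow_iff hn.ne').1 (hy ▸ hy0.isUnit.map _))

theorem isLocalRing_of_forall_isUnit_or_isNilpotent {R : Type*} [Ring R] [Nontrivial R]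
    (h : ∀ x : R, IsUnit x ∨ IsNilpotent x) : IsLocalRing R :=
  .of_isUnit_or_isUnit_one_sub_self fun x ↦ (h x).imp_right IsNilpotent.isUnit_one_sub

theorem maximalIdeal_eq_ker_of_isReduced {R S : Type*} [CommRing R] [IsLocalRing R] [Ring S]
    [Nontrivial S] [IsReduced S] (h : ∀ x : R, IsUnit x ∨ IsNilpotent x) (f : R →+* S) :
    maximalIdeal R = RingHom.ker f :=
  le_antisymm (fun x hx ↦ (((h x).resolve_left hx).map f).eq_zero)
    (le_maximalIdeal (RingHom.ker_ne_top f))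

theorem span_range_mapCotangent_eq_top {K A R : Type*} [CommRing K] [CommRing A] [CommRing R]
    [Algebra K A] [Algebra K R] {I : Ideal A} {J : Ideal R} (f : A →ₐ[K] R) (h : J = I.map f) :
    Submodule.span R (Set.range (I.mapCotangent J f (Ideal.map_le_iff_le_comap.1 h.ge))) = ⊤ := by
  rw [eq_top_iff]
  rintro x -
  obtain ⟨⟨x, hx⟩, rfl⟩ := J.toCotangent_surjective x
  subst h
  induction hx using Submodule.span_induction with
  | mem x hx =>
    obtain ⟨a, ha, rfl⟩ := hx
    exact Submodule.subset_span ⟨I.toCotangent ⟨a, ha⟩, rfl⟩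
  | zero => exact Submodule.zero_mem _
  | add x y hx hy ihx ihy => exact Submodule.add_mem _ ihx ihy
  | smul r x hx ih => exact Submodule.smul_mem _ r ih

theorem rank_cotangentSpace_le_of_maximalIdeal_eq_map {K A R : Type*} [Field K] [CommRing A]
    [CommRing R] [Algebra K A] [Algebra K R] [IsLocalRing R] {I : Ideal A} (f : A →ₐ[K] R)
    (h : maximalIdeal R = I.map f) {n : ℕ} (hn : Module.rank K I.Cotangent ≤ n) :
    Module.rank (ResidueField R) (CotangentSpace R) ≤ n := by
  have : IsScalarTower K (ResidueField R) (CotangentSpace R) := .to₁₃₄ K R _ _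
  let g : I.Cotangent →ₗ[K] CotangentSpace R :=
    I.mapCotangent _ f (Ideal.map_le_iff_le_comap.1 h.ge)
  have hg : Function.Surjective (g.liftBaseChange (ResidueField R)) := by
    rw [← LinearMap.range_eq_top, LinearMap.range_liftBaseChange, LinearMap.coe_range,
      eq_top_iff, ← Submodule.restrictScalars_le R]
    exact (span_range_mapCotangent_eq_top f h).ge.trans (Submodule.span_le_restrictScalars _ _ _)
  rw [← Cardinal.lift_le_nat_iff]
  refine ((g.liftBaseChange (ResidueField R)).lift_rank_le_of_surjective hg).trans ?_
  rw [Module.rank_baseChange]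
  simpa using hn

end LocalRing

open Algebra.TensorProduct in
theorem ker_mapOfCompatibleSMul_eq_map_kaehlerDifferential_ideal (F K L E : Type*) [CommRing F]
    [CommRing K] [CommRing L] [CommRing E] [Algebra F K] [Algebra K L] [Algebra F L]
    [IsScalarTower F K L] [Algebra K E] [Algebra F E] [IsScalarTower F K E] :
    RingHom.ker (mapOfCompatibleSMul K F K L E) =
      (KaehlerDifferential.ideal F K).map
        (map (Algebra.ofId K L) (IsScalarTower.toAlgHom F K E)) := by
  set J := (KaehlerDifferential.ideal F K).map
    (map (Algebra.ofId K L) (IsScalarTower.toAlgHom F K E))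
  have hJ (a : K) : (1 : L) ⊗ₜ[F] algebraMap K E a - algebraMap K L a ⊗ₜ 1 ∈ J := by
    simpa using Ideal.mem_map_of_mem (map (Algebra.ofId K L) (IsScalarTower.toAlgHom F K E))
      (KaehlerDifferential.one_smul_sub_smul_one_mem_ideal F a)
  apply le_antisymm
  · have hker : (RingHom.ker (mapOfCompatibleSMul K F K L E)).restrictScalars K ≤
        J.restrictScalars K := by
      refine (TensorProduct.AlgebraTensorModule.ker_mapOfCompatibleSMul (R := F) K L
        (N := E)).trans_le (Submodule.span_le.2 ?_)
      rintro _ ⟨a, l, e, rfl⟩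
      have := J.mul_mem_left (l ⊗ₜ e) (J.neg_mem (hJ a))
      simpa [mul_sub, Algebra.smul_def, mul_comm] using this
    exact hker
  · rw [Ideal.map_le_iff_le_comap, ← KaehlerDifferential.span_range_eq_ideal, Ideal.span_le]
    rintro _ ⟨a, rfl⟩
    simp [← tmul_one_eq_one_tmul]

section PDegree

open IntermediateField KaehlerDifferential

theorem span_D_image_eq_top_of_adjoin_eq_top {R S : Type*} [CommRing R] [CommRing S] [Algebra R S]
    {s : Set S} (hs : Algebra.adjoin R s = ⊤) : Submodule.span S (D R S '' s) = ⊤ := by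
  set N := Submodule.span S (D R S '' s)
  have hD : N.mkQ.compDer (D R S) = 0 :=
    Derivation.ext_of_adjoin_eq_top s hs fun x hx ↦
      (Submodule.Quotient.mk_eq_zero N).2 (Submodule.subset_span ⟨x, hx, rfl⟩)
  rw [eq_top_iff, ← span_range_derivation, Submodule.span_le]
  rintro _ ⟨x, rfl⟩
  exact (Submodule.Quotient.mk_eq_zero N).1 (congr($hD x))

theorem rank_kaehlerDifferential_le_rank_kaehlerDifferential_int (F K : Type*) [CommRing F]
    [CommRing K] [Algebra F K] : Module.rank K (Ω[K⁄F]) ≤ Module.rank K (Ω[K⁄ℤ]) :=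
  (KaehlerDifferential.map ℤ F K K).rank_le_of_surjective (map_surjective ℤ F K)

theorem rank_le_finrank_of_exact {k U V W : Type*} [DivisionRing k] [AddCommGroup U] [Module k U]
    [AddCommGroup V] [Module k V] [AddCommGroup W] [Module k W] [Module.Finite k U]
    [Module.Finite k W] {f : U →ₗ[k] V} {g : V →ₗ[k] W} (hfg : Function.Exact f g)
    (hg : Function.Surjective g) (h : Module.finrank k W ≤ Module.finrank k f.ker) :
    Module.rank k V ≤ Module.finrank k U := by
  have : Module.Finite k V := .of_exact hfg hg
  rw [← Module.finrank_eq_rank, Nat.cast_le, ← f.finrank_range_add_finrank_ker,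
    ← g.finrank_range_add_finrank_ker, hfg.linearMap_ker_eq,
    LinearMap.range_eq_top.2 hg, finrank_top]
  lia

theorem rank_le_of_forall_linearIndepOn_finset {k V ι : Type*} [DivisionRing k] [AddCommGroup V]
    [Module k V] {v : ι → V} (hv : Submodule.span k (Set.range v) = ⊤) {n : ℕ}
    (h : ∀ s : Finset ι, LinearIndepOn k v s → s.card ≤ n) : Module.rank k V ≤ n := by
  obtain ⟨κ, a, ha, hspan, hli⟩ := exists_linearIndependent' k v
  let b : Module.Basis κ k V := .mk hli (hspan.trans hv).ge
  suffices Cardinal.mk κ ≤ n by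
    rw [← Cardinal.lift_le_nat_iff, ← b.mk_eq_rank]
    simpa using this
  refine Cardinal.card_le_of fun s ↦ ?_
  rw [← s.card_map ⟨a, ha⟩]
  refine h _ ?_
  rw [Finset.coe_map]
  exact (hli.linearIndepOn (s := (s : Set κ))).image_of_comp a v

variable {F K : Type*} [Field F] [Field K] [Algebra F K]

theorem span_D_eq_top_of_adjoin_simple_eq_top {α : K} (hα : IsAlgebraic F α) (h : F⟮α⟯ = ⊤) :
    Submodule.span K {D F K α} = ⊤ := by
  rw [← Set.image_singleton]
  apply span_D_image_eq_top_of_adjoin_eq_top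
  rw [← adjoin_simple_toSubalgebra_of_isAlgebraic hα, h, top_toSubalgebra]

theorem exists_maximal_notMem {x : K} (hx : x ∉ (⊥ : IntermediateField F K)) :
    ∃ N : IntermediateField F K, Maximal (x ∉ ·) N := by
  suffices hchain : ∀ c ⊆ {N : IntermediateField F K | x ∉ N}, IsChain (· ≤ ·) c →
      ∀ M ∈ c, ∃ ub ∈ {N | x ∉ N}, ∀ N ∈ c, N ≤ ub by
    obtain ⟨N, -, hN⟩ := zorn_le_nonempty₀ _ hchain ⊥ hx
    exact ⟨N, hN⟩
  intro c hc hchain M hM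
  have : Nonempty c := ⟨⟨M, hM⟩⟩
  refine ⟨⨆ N : c, N.1, fun hxc ↦ ?_, fun N hN ↦ le_iSup (fun N : c ↦ N.1) ⟨N, hN⟩⟩
  rw [← SetLike.mem_coe, coe_iSup_of_directed hchain.directed] at hxc
  obtain ⟨N, hxN⟩ := Set.mem_iUnion.1 hxc
  exact hc N.2 hxN

theorem adjoin_simple_gen_eq_top (x : K) : F⟮AdjoinSimple.gen F x⟯ = ⊤ :=
  lift_injective F⟮x⟯ (by rw [lift_adjoin_simple, lift_top, AdjoinSimple.coe_gen])

theorem exists_pow_eq_algebraMap_of_notMem_bot (p : ℕ) [ExpChar F p] [IsPurelyInseparable F K]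
    {α : K} (hα : α ∉ (⊥ : IntermediateField F K)) :
    ∃ (k : ℕ) (a : F), α ^ p ^ (k + 1) = algebraMap F K a ∧ ¬ ∃ b, b ^ p = a := by
  have : ExpChar K p := expChar_of_injective_algebraMap (algebraMap F K).injective p
  obtain ⟨a, ha⟩ : α ^ p ^ IsPurelyInseparable.elemExponent F α ∈ (algebraMap F K).range :=
    ⟨_, IsPurelyInseparable.algebraMap_elemReduct_eq' F p α⟩
  obtain ⟨k, hk⟩ : ∃ k, IsPurelyInseparable.elemExponent F α = k + 1 := by
    refine Nat.exists_eq_succ_of_ne_zero fun h0 ↦ hα (mem_bot.2 ⟨a, ?_⟩)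
    rw [ha, h0, pow_zero, pow_one]
  refine ⟨k, a, by rw [ha, hk], ?_⟩
  rintro ⟨b, rfl⟩
  refine IsPurelyInseparable.elemExponent_min' F p (a := α) (n := k) (by lia) ⟨b, ?_⟩
  apply frobenius_inj K p
  rw [frobenius_def, frobenius_def, ← map_pow, ha, hk, pow_succ, pow_mul]

variable (p : ℕ) [hp : Fact p.Prime]

open Polynomial in
theorem finrank_adjoin_simple_of_pow_mem_bot [CharP K p] {x : K}
    (hxp : x ^ p ∈ (⊥ : IntermediateField F K)) (hx : x ∉ (⊥ : IntermediateField F K)) :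
    Module.finrank F F⟮x⟯ = p := by
  obtain ⟨a, ha⟩ := mem_bot.1 hxp
  have hmonic := monic_X_pow_sub_C a hp.out.ne_zero
  have hroot : aeval x (X ^ p - C a) = 0 := by simp [ha]
  have hirr : Irreducible (X ^ p - C a) :=
    X_pow_sub_C_irreducible_of_prime hp.out fun b hb ↦
      hx (mem_bot.2 ⟨b, frobenius_inj K p (by simp [frobenius_def, ← map_pow, hb, ha])⟩)
  rw [adjoin.finrank ⟨_, hmonic, hroot⟩, ← minpoly.eq_of_irreducible_of_monic hirr hroot hmonic,
    natDegree_X_pow_sub_C]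

theorem adjoin_simple_eq_top_of_maximal_notMem [CharP K p]
    (hpow : ∀ y : K, y ^ p ∈ (⊥ : IntermediateField F K)) {x : K} {N : IntermediateField F K}
    (hN : Maximal (x ∉ ·) N) : N⟮x⟯ = ⊤ := by
  have mem_bot_iff (y : K) : y ∈ (⊥ : IntermediateField N K) ↔ y ∈ N := by
    simp [IntermediateField.mem_bot]
  have finrank_adjoin {y : K} (hy : y ∉ N) : Module.finrank N N⟮y⟯ = p :=
    finrank_adjoin_simple_of_pow_mem_bot p
      ((mem_bot_iff _).2 ((bot_le : ⊥ ≤ N) (hpow y))) (by rwa [mem_bot_iff])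
  refine eq_top_iff.2 fun y _ ↦ ?_
  by_cases hy : y ∈ N
  · exact N⟮x⟯.algebraMap_mem ⟨y, hy⟩
  have hxy : x ∈ N⟮y⟯ := by
    by_contra hxy
    have hle : N ≤ N⟮y⟯.restrictScalars F := fun z hz ↦ N⟮y⟯.algebraMap_mem ⟨z, hz⟩
    exact hy (hN.le_of_ge hxy hle (mem_adjoin_simple_self N y))
  have : FiniteDimensional N N⟮y⟯ :=
    Module.finite_of_finrank_pos (by rw [finrank_adjoin hy]; exact hp.out.pos)
  rw [eq_of_le_of_finrank_eq (adjoin_simple_le_iff.2 hxy)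
    ((finrank_adjoin hN.prop).trans (finrank_adjoin hy).symm)]
  exact mem_adjoin_simple_self N y

theorem mem_bot_of_D_eq_zero [CharP K p] (hpow : ∀ y : K, y ^ p ∈ (⊥ : IntermediateField F K))
    {x : K} (hx : D F K x = 0) : x ∈ (⊥ : IntermediateField F K) := by
  -- Choose `N` maximal without `x`: then `K = N(x)`, so `dx = 0` forces `Ω[K⁄N] = 0`, and an
  -- extension that is both unramified and purely inseparable is trivial.
  by_contra hxF
  obtain ⟨N, hN⟩ := exists_maximal_notMem hxF
  have hpowN (y : K) : ∃ z : N, algebraMap N K z = y ^ p :=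
    ⟨⟨y ^ p, (bot_le : ⊥ ≤ N) (hpow y)⟩, rfl⟩
  have hxN : IsIntegral N x := by
    obtain ⟨z, hz⟩ := hpowN x
    exact IsIntegral.of_pow hp.out.pos (hz ▸ isIntegral_algebraMap)
  have htop := adjoin_simple_eq_top_of_maximal_notMem p hpow hN
  have hDx : D N K x = 0 := by
    simpa using congr(KaehlerDifferential.map F N K K $hx)
  have : Subsingleton (Ω[K⁄N]) := by
    rw [← Submodule.subsingleton_iff K, ← subsingleton_iff_bot_eq_top,
      ← span_D_eq_top_of_adjoin_simple_eq_top hxN.isAlgebraic htop, hDx,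
      Submodule.span_zero_singleton]
  have : Algebra.FormallyUnramified N K := ⟨this⟩
  have : Algebra.EssFiniteType N K := fg_top_iff.1 ⟨{x}, by simpa using htop⟩
  have : CharP N p := (algebraMap N K).charP_iff (algebraMap N K).injective p |>.2 inferInstance
  have : ExpChar N p := .prime hp.out
  have : IsPurelyInseparable N K := (isPurelyInseparable_iff_pow_mem N p).2 fun y ↦
    ⟨1, by simpa using hpowN y⟩
  obtain ⟨z, rfl⟩ : x ∈ (algebraMap N K).range := by
    rw [Algebra.FormallyUnramified.range_eq_top_of_isPurelyInseparable N K]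
    trivial
  exact hN.prop z.2

theorem exists_pow_eq_of_D_int_eq_zero [CharP K p] {x : K} (hx : D ℤ K x = 0) :
    ∃ y, y ^ p = x := by
  let P := (frobenius K p).fieldRange
  have hpow (y : K) : y ^ p ∈ (⊥ : IntermediateField P K) := mem_bot.2 ⟨⟨y ^ p, y, rfl⟩, rfl⟩
  have hDx : D P K x = 0 := by simpa using congr(KaehlerDifferential.map ℤ P K K $hx)
  obtain ⟨⟨_, y, rfl⟩, rfl⟩ := mem_bot.1 (mem_bot_of_D_eq_zero p hpow hDx)
  exact ⟨y, rfl⟩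

theorem nontrivial_ker_mapBaseChange_int [CharP F p] [IsPurelyInseparable F K]
    {α : K} (hα : α ∉ (⊥ : IntermediateField F K)) :
    Nontrivial (KaehlerDifferential.mapBaseChange ℤ F K).ker := by
  have : ExpChar F p := .prime hp.out
  have : CharP K p := (algebraMap F K).charP_iff (algebraMap F K).injective p |>.1 inferInstance
  obtain ⟨k, a, hαa, ha⟩ := exists_pow_eq_algebraMap_of_notMem_bot p hα
  have hDa : D ℤ F a ≠ 0 := fun h ↦ ha (exists_pow_eq_of_D_int_eq_zero p h)
  have hDαa : D ℤ K (algebraMap F K a) = 0 := by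
    rw [← hαa, Derivation.leibniz_pow, ← Nat.cast_smul_eq_nsmul K]
    simp
  refine ⟨⟨⟨1 ⊗ₜ D ℤ F a, ?_⟩, 0, fun h ↦ hDa ?_⟩⟩
  · rw [LinearMap.mem_ker, mapBaseChange_tmul, map_D, hDαa, smul_zero]
  · exact (Module.FaithfullyFlat.one_tmul_eq_zero_iff F _ _).1 congr(($h).1)

theorem rank_kaehlerDifferential_int_le_of_adjoin_simple_eq_top [CharP F p]
    [IsPurelyInseparable F K] {α : K} (hα : F⟮α⟯ = ⊤) {n : ℕ} (hn : Module.rank F (Ω[F⁄ℤ]) ≤ n) :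
    Module.rank K (Ω[K⁄ℤ]) ≤ n := by
  have hspan : Submodule.span K {D F K α} = ⊤ :=
    span_D_eq_top_of_adjoin_simple_eq_top (Algebra.IsAlgebraic.isAlgebraic α) hα
  have : Module.Finite F (Ω[F⁄ℤ]) :=
    Module.rank_lt_aleph0_iff.1 (hn.trans_lt Cardinal.natCast_lt_aleph0)
  have : Module.Finite K (Ω[K⁄F]) := ⟨⟨{D F K α}, by simpa using hspan⟩⟩
  refine (rank_le_finrank_of_exact (exact_mapBaseChange_map ℤ F K)
    (map_surjective ℤ F K) ?_).trans ?_
  · by_cases hαF : α ∈ (⊥ : IntermediateField F K)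
    · obtain ⟨a, rfl⟩ := mem_bot.1 hαF
      rw [← finrank_top K (Ω[K⁄F]), ← hspan, Derivation.map_algebraMap,
        Submodule.span_zero_singleton, finrank_bot]
      exact Nat.zero_le _
    · have hker := nontrivial_ker_mapBaseChange_int p hαF
      have hle : Module.finrank K (Ω[K⁄F]) ≤ 1 := by
        rw [← finrank_top K (Ω[K⁄F]), ← hspan]
        exact (finrank_span_le_card (R := K) {D F K α}).trans (by simp)
      exact hle.trans (Submodule.one_le_finrank_iff.2 (Submodule.nontrivial_iff_ne_bot.1 hker))
  · rw [Module.finrank_baseChange]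
    exact_mod_cast Module.finrank_le_of_rank_le hn

variable (F K)

theorem rank_kaehlerDifferential_int_le_of_isPurelyInseparable [IsPurelyInseparable F K] [CharP F p]
    {n : ℕ} (hn : Module.rank F (Ω[F⁄ℤ]) ≤ n) : Module.rank K (Ω[K⁄ℤ]) ≤ n := by
  -- Linearly independent differentials of finitely many elements of `K` are already independent
  -- over the subfield these generate over `F`, which is reached by simple extensions.
  refine rank_le_of_forall_linearIndepOn_finset (span_range_derivation ℤ K) fun s hs ↦ ?_
  have hN : Module.rank (adjoin F (s : Set K)) (Ω[adjoin F (s : Set K)⁄ℤ]) ≤ n := by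
    refine induction_on_adjoin_finset s (fun N ↦ Module.rank N (Ω[N⁄ℤ]) ≤ n) ?_ fun M x _ hM ↦ ?_
    · rw [← adjoin_zero (F := F) (E := K)]
      exact rank_kaehlerDifferential_int_le_of_adjoin_simple_eq_top p
        (adjoin_simple_gen_eq_top 0) hn
    · have : CharP M p := (algebraMap F M).charP_iff (algebraMap F M).injective p |>.1 inferInstance
      exact rank_kaehlerDifferential_int_le_of_adjoin_simple_eq_top p
        (adjoin_simple_gen_eq_top x) hM
  let v : s → Ω[adjoin F (s : Set K)⁄ℤ] := fun i ↦ D ℤ _ ⟨i, subset_adjoin F _ i.2⟩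
  have hv : LinearIndependent (adjoin F (s : Set K)) v := by
    refine .of_comp (KaehlerDifferential.map ℤ ℤ (adjoin F (s : Set K)) K) ?_
    convert! (hs : LinearIndependent K _).restrict_scalars' (adjoin F (s : Set K))
    simp [v]
  have := hv.cardinal_lift_le_rank.trans (Cardinal.lift_le.2 hN)
  simpa using this

theorem rank_kaehlerDifferential_le_of_isPurelyInseparable [IsPurelyInseparable F K] {n : ℕ}
    (hn : Module.rank F (Ω[F⁄ℤ]) ≤ n) : Module.rank K (Ω[K⁄F]) ≤ n := by
  obtain ⟨p, hp⟩ := ExpChar.exists F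
  rcases hp with _ | hp
  · have : Subsingleton (Ω[K⁄F]) := KaehlerDifferential.subsingleton_of_surjective F K
      (IsPurelyInseparable.surjective_algebraMap_of_isSeparable F K)
    simp
  · have : Fact p.Prime := ⟨hp⟩
    exact (rank_kaehlerDifferential_le_rank_kaehlerDifferential_int F K).trans
      (rank_kaehlerDifferential_int_le_of_isPurelyInseparable F K p hn)

end PDegree

-- By Mac Lane's criterion, for `E` a perfect closure of `K` the assumption `IsReduced (L ⊗[K] E)`
-- says that `L` is separable over `K`, possibly without a separating transcendence basis.
theorem edim_le_one_of_pdeg_le_one_general (F K L E : Type*)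
    [Field F] [Field K] [Field L] [Field E]
    [Algebra F K] [Algebra K L] [Algebra F L] [IsScalarTower F K L]
    [Algebra K E] [Algebra F E] [IsScalarTower F K E]
    [IsPurelyInseparable F K] [IsPurelyInseparable K E] [IsReduced (L ⊗[K] E)]
    {n : ℕ} (hpdeg : Module.rank F (Ω[F⁄ℤ]) ≤ n) :
    ∃ h : IsLocalRing (L ⊗[F] E),
      letI : IsLocalRing (L ⊗[F] E) := h
      Module.rank (IsLocalRing.ResidueField (L ⊗[F] E))
        (IsLocalRing.CotangentSpace (L ⊗[F] E)) ≤ n := by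
  have : IsPurelyInseparable F E := .trans F K E
  have hunit (x : L ⊗[F] E) : IsUnit x ∨ IsNilpotent x :=
    isUnit_or_isNilpotent_tensorProduct_of_isPurelyInseparable x
  refine ⟨isLocalRing_of_forall_isUnit_or_isNilpotent hunit, ?_⟩
  let : IsLocalRing (L ⊗[F] E) := isLocalRing_of_forall_isUnit_or_isNilpotent hunit
  have hmax := (maximalIdeal_eq_ker_of_isReduced hunit _).trans
    (ker_mapOfCompatibleSMul_eq_map_kaehlerDifferential_ideal F K L E)
  exact rank_cotangentSpace_le_of_maximalIdeal_eq_map _ hmax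
    (rank_kaehlerDifferential_le_of_isPurelyInseparable F K hpdeg)

/-- Let `F` be a field of characteristic `p > 0` with `p`-degree at most `1`,
let `F ⊆ K` be a finite purely inseparable field extension, and let `L` be a field containing
`K` that is finitely generated over `F` and separable over `K`.  Let `E` be a perfect closure
of `K` (a perfect field, purely inseparable over `K`).  Then the local Artin ring `L ⊗_F E`
has embedding dimension at most `1`. -/
theorem edim_le_one_of_pdeg_le_one (F K L E : Type*) [Field F] [Field K] [Field L] [Field E]
    (p : ℕ) [Fact p.Prime] [CharP F p]
    [Algebra F K] [Algebra K L] [Algebra F L] [IsScalarTower F K L]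
    [Algebra K E] [Algebra F E] [IsScalarTower F K E] [ExpChar E p] [PerfectRing E p] [IsPurelyInseparable K E]
    (hpdeg : Module.rank F (Ω[F⁄ℤ]) ≤ 1)
    [FiniteDimensional F K] [IsPurelyInseparable F K]
    (hfg : ∃ s : Finset L, IntermediateField.adjoin F (s : Set L) = ⊤)
    (hsep : IsSeparablyGenerated K L) :
    ∃ h : IsLocalRing (L ⊗[F] E),
      letI : IsLocalRing (L ⊗[F] E) := h
      Module.finrank (IsLocalRing.ResidueField (L ⊗[F] E))
        (IsLocalRing.CotangentSpace (L ⊗[F] E)) ≤ 1 := by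
  have := hsep.isReduced_tensorProduct E
  obtain ⟨h, hrank⟩ := edim_le_one_of_pdeg_le_one_general F K L E (n := 1) (mod_cast hpdeg)
  exact ⟨h, Module.finrank_le_of_rank_le hrank⟩
end

section
/- Let B be a complete one-dimensional local Noetherian Gorenstein ring, B ⊆ A a finite ring extension with A a maximal Cohen–Macaulay B-module such that B_s = A_s for some regular element s in the maximal ideal of B (so A/B has finite length). Let 𝔠 = Ann_B(A/B) be the conductor ideal. Then length_B(A/𝔠) = 2·length_B(B/𝔠). -/
noncomputable section

open CategoryTheory

/-- The length of a module, defined as the Krull dimension of its submodule lattice. -/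
noncomputable def moduleLength (R M : Type*) [CommRing R] [AddCommGroup M] [Module R M] :
    WithBot ℕ∞ := Order.krullDim (Submodule R M)

/-- A Noetherian local ring `B` is Gorenstein if it has finite injective dimension over
itself; by Bass' criterion this holds iff `Ext^i(κ, B)` vanishes for all large `i`,
where `κ` is the residue field. -/
def IsGorensteinLocalRing (B : Type*) [CommRing B] [IsLocalRing B] : Prop :=
  IsNoetherianRing B ∧ ∃ n : ℕ, ∀ i : ℕ, n < i →
    Subsingleton (((Ext B (ModuleCat B) i).obj
      (Opposite.op (ModuleCat.of B (IsLocalRing.ResidueField B)))).obj (ModuleCat.of B B))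

/-!
Let `M` be a module of finite length over a local ring `(R, k)` with `ℓ(Hom(k, M)) ≤ 1`. Dévissage
gives `ℓ(Hom(N, M)) ≤ ℓ(N)` for every `N` of finite length. Scalar multiplication embeds
`R ⧸ Ann M` into `Hom(M, M)`, and its transpose embeds `M` into `Hom(R ⧸ Ann M, M)`, so
`ℓ(R ⧸ Ann M) = ℓ(M)`.

This applies to `M = A ⧸ B`, whose annihilator is `𝔠`. If `t = s ^ (n + 1) ∈ 𝔠`, multiplication by
`t` embeds `A ⧸ B` into `B ⧸ tB`, and `Hom(k, B ⧸ tB)` embeds into `Ext¹(k, B)` because `t` kills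
`k` and is regular on `B`. Embedding `k` into `B ⧸ tB`, whose projective dimension is one, brings
the vanishing of `Extⁱ(k, B)` for large `i` down to `i = 2`. Since also `Ext⁰(k, B) = 0`, the length
of `Ext¹(-, B)` is additive on modules of finite length, so
`ℓ(B ⧸ tB) · ℓ(Ext¹(k, B)) = ℓ(Ext¹(B ⧸ tB, B)) ≤ ℓ(B ⧸ tB)` and `ℓ(Ext¹(k, B)) ≤ 1`.
Finally `ℓ(A ⧸ 𝔠A) = ℓ(B ⧸ 𝔠) + ℓ(A ⧸ B) = 2 ℓ(B ⧸ 𝔠)`.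
-/

open IsLocalRing
open scoped Pointwise

universe u v w t

section Length

variable {R : Type*} [CommRing R]

theorem length_le_add_of_exact {N M P : Type*} [AddCommGroup N] [Module R N] [AddCommGroup M]
    [Module R M] [AddCommGroup P] [Module R P] {f : N →ₗ[R] M} {g : M →ₗ[R] P}
    (h : Function.Exact f g) : Module.length R M ≤ Module.length R N + Module.length R P := by
  rw [Module.length_eq_add_of_exact (LinearMap.range f).subtype (LinearMap.range f).mkQ
    (Submodule.injective_subtype _) (Submodule.mkQ_surjective _) (LinearMap.exact_subtype_mkQ _)]
  refine add_le_add (Module.length_le_of_surjective _ f.surjective_rangeRestrict) ?_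
  exact Module.length_le_of_injective
    ((LinearMap.range f).liftQ g (LinearMap.range_le_ker_iff.2 h.linearMap_comp_eq_zero))
    (LinearMap.ker_eq_bot.1 (Submodule.ker_liftQ_eq_bot _ _ _ h.linearMap_ker_eq.le))

theorem length_eq_one_add_length_submodule {M : Type*} [AddCommGroup M] [Module R M]
    (N : Submodule R M) [IsSimpleModule R (M ⧸ N)] :
    Module.length R M = 1 + Module.length R N := by
  rw [Module.length_eq_add_of_exact N.subtype N.mkQ N.injective_subtype N.mkQ_surjective
    (LinearMap.exact_subtype_mkQ N), Module.length_eq_one R (M ⧸ N), add_comm]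

theorem length_linearMap_le_of_injective (N : Type*) {M P : Type*} [AddCommGroup N] [Module R N]
    [AddCommGroup M] [Module R M] [AddCommGroup P] [Module R P] {f : M →ₗ[R] P}
    (hf : Function.Injective f) : Module.length R (N →ₗ[R] M) ≤ Module.length R (N →ₗ[R] P) :=
  Module.length_le_of_injective (LinearMap.llcomp R N M P f) fun _ _ h =>
    LinearMap.cancel_left hf |>.1 h

theorem length_le_length_quotSMulTop_of_surjective {M N : Type*} [AddCommGroup M] [Module R M]
    [AddCommGroup N] [Module R N] {r : R} (hr : r ∈ Module.annihilator R N) {f : M →ₗ[R] N}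
    (hf : Function.Surjective f) : Module.length R N ≤ Module.length R (QuotSMulTop r M) := by
  refine Module.length_le_of_surjective ((r • (⊤ : Submodule R M)).liftQ f ?_) ?_
  · intro m hm
    obtain ⟨m, -, rfl⟩ := (Submodule.mem_smul_pointwise_iff_exists _ _ _).1 hm
    rw [LinearMap.mem_ker, map_smul, Module.mem_annihilator.1 hr]
  · rwa [← LinearMap.range_eq_top, Submodule.range_liftQ, LinearMap.range_eq_top]

variable [IsLocalRing R]

theorem nonempty_linearEquiv_residueField (M : Type*) [AddCommGroup M] [Module R M]
    [IsSimpleModule R M] : Nonempty (M ≃ₗ[R] ResidueField R) := by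
  obtain ⟨I, hI, ⟨e⟩⟩ := isSimpleModule_iff_quot_maximal.1 (inferInstance : IsSimpleModule R M)
  obtain rfl := IsLocalRing.eq_maximalIdeal hI
  exact ⟨e⟩

theorem exists_injective_residueField_linearMap (M : Type*) [AddCommGroup M] [Module R M]
    [IsArtinian R M] [Nontrivial M] :
    ∃ f : ResidueField R →ₗ[R] M, Function.Injective f := by
  obtain ⟨N, hN⟩ := IsAtomic.exists_atom (Submodule R M)
  have : IsSimpleModule R N := isSimpleModule_iff_isAtom.2 hN
  obtain ⟨e⟩ := nonempty_linearEquiv_residueField (R := R) N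
  exact ⟨N.subtype ∘ₗ e.symm.toLinearMap, N.injective_subtype.comp e.symm.injective⟩

theorem length_linearMap_le {M : Type*} [AddCommGroup M] [Module R M] (hM : IsFiniteLength R M)
    (X : Type*) [AddCommGroup X] [Module R X] :
    Module.length R (M →ₗ[R] X) ≤
      Module.length R M * Module.length R (ResidueField R →ₗ[R] X) := by
  induction hM with
  | of_subsingleton => simp [Module.length_eq_zero]
  | @of_simple_quotient M _ _ N _ _ ih =>
    obtain ⟨e⟩ := nonempty_linearEquiv_residueField (R := R) (M ⧸ N)
    calc Module.length R (M →ₗ[R] X)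
        ≤ Module.length R (M ⧸ N →ₗ[R] X) + Module.length R (N →ₗ[R] X) :=
          length_le_add_of_exact (LinearMap.exact_lcomp_of_exact_of_surjective X
            (LinearMap.exact_subtype_mkQ N) N.mkQ_surjective)
      _ ≤ Module.length R (ResidueField R →ₗ[R] X) +
            Module.length R N * Module.length R (ResidueField R →ₗ[R] X) := by
          rw [(LinearEquiv.congrLeft X R e).length_eq]
          gcongr
      _ = Module.length R M * Module.length R (ResidueField R →ₗ[R] X) := by
          rw [length_eq_one_add_length_submodule N, one_add_mul]

theorem length_linearMap_le_length {M X : Type*} [AddCommGroup M] [Module R M]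
    (hM : IsFiniteLength R M) [AddCommGroup X] [Module R X]
    (hX : Module.length R (ResidueField R →ₗ[R] X) ≤ 1) :
    Module.length R (M →ₗ[R] X) ≤ Module.length R M :=
  (length_linearMap_le hM X).trans (mul_le_of_le_one_right' hX)

theorem length_quotient_annihilator {M : Type*} [AddCommGroup M] [Module R M]
    (hM : IsFiniteLength R M) (hsocle : Module.length R (ResidueField R →ₗ[R] M) ≤ 1) :
    Module.length R (R ⧸ Module.annihilator R M) = Module.length R M := by
  let φ : (R ⧸ Module.annihilator R M) →ₗ[R] M →ₗ[R] M :=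
    (Module.annihilator R M).liftQ (LinearMap.lsmul R M) fun _ =>
      Module.mem_annihilator_iff_lsmul_eq_zero.1
  have hφ : Function.Injective φ := LinearMap.ker_eq_bot.1 <|
    Submodule.ker_liftQ_eq_bot _ _ _ fun _ => Module.mem_annihilator_iff_lsmul_eq_zero.2
  have hφ_flip : Function.Injective φ.flip := fun m m' h => by
    have hφ_one (m : M) : φ (Submodule.Quotient.mk 1) m = m := one_smul R m
    have heq : φ (Submodule.Quotient.mk 1) m = φ (Submodule.Quotient.mk 1) m' :=
      LinearMap.congr_fun h (Submodule.Quotient.mk 1)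
    rwa [hφ_one, hφ_one] at heq
  have hle : Module.length R (R ⧸ Module.annihilator R M) ≤ Module.length R M :=
    (Module.length_le_of_injective φ hφ).trans (length_linearMap_le_length hM hsocle)
  have hfinite : IsFiniteLength R (R ⧸ Module.annihilator R M) :=
    Module.length_ne_top_iff.1 (ne_top_of_le_ne_top (Module.length_ne_top_iff.2 hM) hle)
  exact hle.antisymm <|
    (Module.length_le_of_injective _ hφ_flip).trans (length_linearMap_le_length hfinite hsocle)

end Length

section Abelian

variable {C : Type u} [Category.{v} C] [Abelian C]

-- `Ext R C` consists of the derived functors of `Hom`; `Abelian.Ext`, for which the long exact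
-- sequences are available, is a group of morphisms in the derived category.
theorem subsingleton_abelianExt_of_subsingleton_ext (R : Type*) [Ring R] [Linear R C]
    [EnoughProjectives C] [HasExt.{w} C] {X Y : C} {i : ℕ}
    (h : Subsingleton (((Ext R C (i + 1)).obj (Opposite.op X)).obj Y)) :
    Subsingleton (Abelian.Ext X Y (i + 1)) := by
  let P := projectiveResolution X
  have hexact : (P.complex.linearYonedaObj R Y).ExactAt (i + 1) :=
    (HomologicalComplex.exactAt_iff_isZero_homology _ _).2
      ((ModuleCat.isZero_of_subsingleton _).of_iso (P.isoExt (R := R) (i + 1) Y).symm)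
  rw [HomologicalComplex.exactAt_iff' _ i (i + 1) (i + 2) (by simp) (by simp),
    ShortComplex.moduleCat_exact_iff] at hexact
  refine subsingleton_of_forall_eq 0 fun α => ?_
  obtain ⟨f, hf, rfl⟩ := P.extMk_surjective α (i + 2) rfl
  exact (P.extMk_eq_zero_iff f _ _ hf i rfl).2 (hexact f hf)

variable [HasExt.{w} C] (R : Type t) [CommRing R] [Linear R C] {S : ShortComplex C}

theorem exact_precompOfLinear_of_shortExact (hS : S.ShortExact) (Y : C) (n : ℕ) :
    Function.Exact ((Abelian.Ext.mk₀ S.g).precompOfLinear R Y (zero_add n))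
      ((Abelian.Ext.mk₀ S.f).precompOfLinear R Y (zero_add n)) := by
  refine fun x => ⟨Abelian.Ext.contravariant_sequence_exact₂ hS Y x, ?_⟩
  rintro ⟨y, rfl⟩
  simp

theorem surjective_precompOfLinear_of_shortExact (hS : S.ShortExact) {Y : C} {n : ℕ}
    (h : Subsingleton (Abelian.Ext S.X₃ Y (n + 1))) :
    Function.Surjective ((Abelian.Ext.mk₀ S.f).precompOfLinear R Y (zero_add n)) := fun x =>
  Abelian.Ext.contravariant_sequence_exact₁ hS Y x (add_comm 1 n) (h.elim _ _)

theorem injective_precompOfLinear_of_shortExact (hS : S.ShortExact) {Y : C} {n : ℕ}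
    (h : Subsingleton (Abelian.Ext S.X₁ Y n)) :
    Function.Injective ((Abelian.Ext.mk₀ S.g).precompOfLinear R Y (zero_add (n + 1))) := by
  rw [injective_iff_map_eq_zero]
  intro x hx
  obtain ⟨y, rfl⟩ := Abelian.Ext.contravariant_sequence_exact₃ hS Y x hx (add_comm 1 n)
  rw [h.elim y 0, Abelian.Ext.comp_zero]

theorem length_ext_le_add_of_shortExact (hS : S.ShortExact) (Y : C) (n : ℕ) :
    Module.length R (Abelian.Ext S.X₂ Y n) ≤
      Module.length R (Abelian.Ext S.X₃ Y n) + Module.length R (Abelian.Ext S.X₁ Y n) :=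
  length_le_add_of_exact (exact_precompOfLinear_of_shortExact R hS Y n)

theorem length_ext_eq_add_of_shortExact (hS : S.ShortExact) {Y : C} {n : ℕ}
    (h₁ : Subsingleton (Abelian.Ext S.X₁ Y n)) (h₃ : Subsingleton (Abelian.Ext S.X₃ Y (n + 2))) :
    Module.length R (Abelian.Ext S.X₂ Y (n + 1)) =
      Module.length R (Abelian.Ext S.X₃ Y (n + 1)) + Module.length R (Abelian.Ext S.X₁ Y (n + 1)) :=
  Module.length_eq_add_of_exact _ _ (injective_precompOfLinear_of_shortExact R hS h₁)
    (surjective_precompOfLinear_of_shortExact R hS h₃)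
    (exact_precompOfLinear_of_shortExact R hS Y (n + 1))

theorem injective_postcompOfLinear_extClass (hS : S.ShortExact) {X : C} {n : ℕ}
    (h : Subsingleton (Abelian.Ext X S.X₂ n)) :
    Function.Injective (hS.extClass.postcompOfLinear R X (rfl : n + 1 = n + 1)) := by
  rw [injective_iff_map_eq_zero]
  intro x hx
  obtain ⟨y, rfl⟩ := Abelian.Ext.covariant_sequence_exact₃ X hS x rfl hx
  rw [h.elim y 0, Abelian.Ext.zero_comp]

variable {R} in
/-- The isomorphism `Ext^n(X', Y) ≃ Ext^n(X, Y)` induced by an isomorphism `X ≅ X'`. -/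
def extCongrLeft {X X' : C} (e : X ≅ X') (Y : C) (n : ℕ) :
    Abelian.Ext X' Y n ≃ₗ[R] Abelian.Ext X Y n :=
  LinearEquiv.ofLinearMap ((Abelian.Ext.mk₀ e.hom).precompOfLinear R Y (zero_add n))
    ((Abelian.Ext.mk₀ e.inv).precompOfLinear R Y (zero_add n)) (by ext; simp) (by ext; simp)

end Abelian

section LocalExt

variable {R : Type u} [CommRing R]

theorem shortExact_subtype_mkQ {M : Type v} [AddCommGroup M] [Module R M] (N : Submodule R M) :
    (ModuleCat.shortComplexOfCompEqZero N.subtype N.mkQ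
      (LinearMap.exact_subtype_mkQ N).linearMap_comp_eq_zero).ShortExact :=
  ModuleCat.shortComplex_shortExact _ (LinearMap.exact_subtype_mkQ N) N.injective_subtype
    N.mkQ_surjective

theorem subsingleton_ext_of_subsingleton [Small.{v} R] (M : Type v) [AddCommGroup M] [Module R M]
    [Subsingleton M] (Y : ModuleCat.{v} R) (n : ℕ) :
    Subsingleton (Abelian.Ext (ModuleCat.of R M) Y n) :=
  have := (ModuleCat.isZero_of_subsingleton (ModuleCat.of R M)).hasProjectiveDimensionLT_zero
  HasProjectiveDimensionLT.subsingleton _ 0 n (Nat.zero_le n) Y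

variable [IsLocalRing R]

theorem nonempty_extEquiv_residueField (M : Type u) [AddCommGroup M] [Module R M]
    [IsSimpleModule R M] (Y : ModuleCat.{u} R) (n : ℕ) :
    Nonempty (Abelian.Ext (ModuleCat.of R M) Y n ≃ₗ[R]
      Abelian.Ext (ModuleCat.of R (ResidueField R)) Y n) := by
  obtain ⟨e⟩ := nonempty_linearEquiv_residueField (R := R) M
  exact ⟨extCongrLeft e.toModuleIso.symm Y n⟩

variable {M : Type u} [AddCommGroup M] [Module R M] {Y : ModuleCat.{u} R} {n : ℕ}

theorem length_ext_le (hM : IsFiniteLength R M) (Y : ModuleCat.{u} R) (n : ℕ) :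
    Module.length R (Abelian.Ext (ModuleCat.of R M) Y n) ≤
      Module.length R M * Module.length R (Abelian.Ext (ModuleCat.of R (ResidueField R)) Y n) := by
  induction hM with
  | @of_subsingleton M =>
    have := subsingleton_ext_of_subsingleton M Y n
    simp [Module.length_eq_zero]
  | @of_simple_quotient M _ _ N _ _ ih =>
    obtain ⟨e⟩ := nonempty_extEquiv_residueField (M ⧸ N) Y n
    refine (length_ext_le_add_of_shortExact R (shortExact_subtype_mkQ N) Y n).trans ?_
    rw [length_eq_one_add_length_submodule N, e.length_eq, one_add_mul]
    gcongr

theorem subsingleton_ext_of_isFiniteLength (hM : IsFiniteLength R M)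
    (h : Subsingleton (Abelian.Ext (ModuleCat.of R (ResidueField R)) Y n)) :
    Subsingleton (Abelian.Ext (ModuleCat.of R M) Y n) := by
  have hle := length_ext_le hM Y n
  rw [Module.length_eq_zero_iff.2 h, mul_zero, nonpos_iff_eq_zero] at hle
  exact Module.length_eq_zero_iff.1 hle

theorem length_ext_eq_mul (hM : IsFiniteLength R M)
    (h₀ : Subsingleton (Abelian.Ext (ModuleCat.of R (ResidueField R)) Y n))
    (h₂ : Subsingleton (Abelian.Ext (ModuleCat.of R (ResidueField R)) Y (n + 2))) :
    Module.length R (Abelian.Ext (ModuleCat.of R M) Y (n + 1)) =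
      Module.length R M *
        Module.length R (Abelian.Ext (ModuleCat.of R (ResidueField R)) Y (n + 1)) := by
  induction hM with
  | @of_subsingleton M =>
    have := subsingleton_ext_of_subsingleton M Y (n + 1)
    simp [Module.length_eq_zero]
  | @of_simple_quotient M _ _ N _ hN ih =>
    obtain ⟨e⟩ := nonempty_extEquiv_residueField (M ⧸ N) Y (n + 1)
    obtain ⟨e₂⟩ := nonempty_extEquiv_residueField (M ⧸ N) Y (n + 2)
    rw [length_eq_one_add_length_submodule N, one_add_mul, ← ih, ← e.length_eq]
    exact length_ext_eq_add_of_shortExact R (shortExact_subtype_mkQ N)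
      (subsingleton_ext_of_isFiniteLength hN h₀) e₂.toEquiv.subsingleton

variable [Nontrivial M]

theorem subsingleton_ext_residueField_of_succ (hM : IsFiniteLength R M)
    (hn : Subsingleton (Abelian.Ext (ModuleCat.of R M) Y n))
    (hsucc : Subsingleton (Abelian.Ext (ModuleCat.of R (ResidueField R)) Y (n + 1))) :
    Subsingleton (Abelian.Ext (ModuleCat.of R (ResidueField R)) Y n) := by
  -- As `k` embeds into `M`, `Ext^n(k, Y)` lies between `Ext^n(M, Y)` and `Ext^(n + 1)(M ⧸ k, Y)`.
  obtain ⟨_, _⟩ := isFiniteLength_iff_isNoetherian_isArtinian.1 hM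
  obtain ⟨f, hf⟩ := exists_injective_residueField_linearMap (R := R) M
  have hS := ModuleCat.shortComplex_shortExact
    (ModuleCat.shortComplexOfCompEqZero f (LinearMap.range f).mkQ
      (LinearMap.exact_map_mkQ_range f).linearMap_comp_eq_zero)
    (LinearMap.exact_map_mkQ_range f) hf (Submodule.mkQ_surjective _)
  have hcoker := subsingleton_ext_of_isFiniteLength
    (hM.of_surjective (Submodule.mkQ_surjective (LinearMap.range f))) hsucc
  exact (surjective_precompOfLinear_of_shortExact R hS hcoker).subsingleton

theorem subsingleton_ext_residueField_of_hasProjectiveDimensionLT (hM : IsFiniteLength R M) {d : ℕ}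
    [HasProjectiveDimensionLT (ModuleCat.of R M) d]
    (h : ∀ i, n < i → Subsingleton (Abelian.Ext (ModuleCat.of R (ResidueField R)) Y i))
    {i : ℕ} (hi : d ≤ i) :
    Subsingleton (Abelian.Ext (ModuleCat.of R (ResidueField R)) Y i) := by
  have hlarge : n < i + (n + 1) := by lia
  refine Nat.decreasingInduction' (P := fun j =>
    Subsingleton (Abelian.Ext (ModuleCat.of R (ResidueField R)) Y j)) (fun j _ hij hj => ?_)
    (Nat.le_add_right i (n + 1)) (h _ hlarge)
  exact subsingleton_ext_residueField_of_succ hM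
    (HasProjectiveDimensionLT.subsingleton (ModuleCat.of R M) d j (hi.trans hij) Y) hj

end LocalExt

section RegularElement

variable {R : Type u} [CommRing R]

/-- The identification of `Ext^0(M, N)` with the module of linear maps from `M` to `N`. -/
def extZeroLinearEquiv [Small.{v} R] (M N : ModuleCat.{v} R) :
    Abelian.Ext M N 0 ≃ₗ[R] (M →ₗ[R] N) :=
  Abelian.Ext.linearEquiv₀ ≪≫ₗ ModuleCat.homLinearEquiv

theorem hasProjectiveDimensionLT_quotSMulTop [Small.{v} R] {M : ModuleCat.{v} R} [Projective M]
    {r : R} (hr : IsSMulRegular M r) :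
    HasProjectiveDimensionLT (ModuleCat.of R (QuotSMulTop r M)) 2 :=
  hr.smulShortComplex_shortExact.hasProjectiveDimensionLT_X₃ 1
    ((projective_iff_hasProjectiveDimensionLT_one (X := M)).1 inferInstance)
    (hasProjectiveDimensionLT_of_ge M 1 2 (by lia))

theorem smul_ext_eq_zero_of_mem_annihilator [Small.{v} R] {M Y : ModuleCat.{v} R} {r : R}
    (hr : r ∈ Module.annihilator R M) {n : ℕ} (x : Abelian.Ext M Y n) : r • x = 0 := by
  have hid : r • 𝟙 M = 0 := ModuleCat.hom_ext <| LinearMap.ext <| Module.mem_annihilator.1 hr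
  rw [← Abelian.Ext.mk₀_id_comp x, ← Abelian.Ext.smul_comp, ← Abelian.Ext.mk₀_smul, hid,
    Abelian.Ext.mk₀_zero, Abelian.Ext.zero_comp]

theorem length_ext_one_quotSMulTop_le {t : R} (ht : IsSMulRegular R t) (Y : ModuleCat.{u} R) :
    Module.length R (Abelian.Ext (ModuleCat.of R (QuotSMulTop t R)) Y 1) ≤
      Module.length R (QuotSMulTop t Y) := by
  have hS := IsSMulRegular.smulShortComplex_shortExact (M := ModuleCat.of R R) ht
  have hproj : Projective ((ModuleCat.of R R).smulShortComplex t).X₂ :=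
    inferInstanceAs (Projective (ModuleCat.of R R))
  let e : Y ≃ₗ[R] Abelian.Ext (ModuleCat.of R R) Y 0 :=
    (LinearMap.ringLmapEquivSelf R R Y).symm ≪≫ₗ (extZeroLinearEquiv (ModuleCat.of R R) Y).symm
  let δ : Abelian.Ext (ModuleCat.of R R) Y 0 →ₗ[R]
      Abelian.Ext (ModuleCat.of R (QuotSMulTop t R)) Y 1 :=
    hS.extClass.precompOfLinear R Y (add_zero 1)
  have hδ : Function.Surjective δ := precomp_extClass_surjective_of_projective_X₂ Y hS 0
  have hkill : t ∈ Module.annihilator R (Abelian.Ext (ModuleCat.of R (QuotSMulTop t R)) Y 1) :=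
    Module.mem_annihilator.2 <|
      smul_ext_eq_zero_of_mem_annihilator (QuotSMulTop.mem_annihilator R t)
  exact length_le_length_quotSMulTop_of_surjective hkill (f := δ ∘ₗ e.toLinearMap)
    (hδ.comp e.surjective)

theorem subsingleton_ext_zero_of_mem_annihilator [Small.{v} R] {M : Type v} [AddCommGroup M]
    [Module R M] {Y : ModuleCat.{v} R} {t : R} (ht : IsSMulRegular Y t)
    (hM : t ∈ Module.annihilator R M) :
    Subsingleton (Abelian.Ext (ModuleCat.of R M) Y 0) :=
  have : Subsingleton (M →ₗ[R] Y) := IsSMulRegular.linearMap_subsingleton_of_mem_annihilator ht hM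
  (extZeroLinearEquiv (ModuleCat.of R M) Y).toEquiv.subsingleton

theorem length_linearMap_quotSMulTop_le [Small.{v} R] {M : Type v} [AddCommGroup M]
    [Module R M] {Y : ModuleCat.{v} R} {t : R} (ht : IsSMulRegular Y t)
    (hM : t ∈ Module.annihilator R M) :
    Module.length R (M →ₗ[R] QuotSMulTop t Y) ≤
      Module.length R (Abelian.Ext (ModuleCat.of R M) Y 1) := by
  have hS := ht.smulShortComplex_shortExact
  have hzero := subsingleton_ext_zero_of_mem_annihilator ht hM
  rw [← (extZeroLinearEquiv (ModuleCat.of R M) (ModuleCat.of R (QuotSMulTop t Y))).length_eq]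
  exact Module.length_le_of_injective _ (injective_postcompOfLinear_extClass R hS hzero)

theorem isFiniteLength_quotSMulTop [IsNoetherianRing R] [Ring.KrullDimLE 1 R] {t : R}
    (ht : IsSMulRegular R t) : IsFiniteLength R (QuotSMulTop t R) := by
  let e : QuotSMulTop t R ≃ₗ[R] R ⧸ Ideal.span {t} := Submodule.quotEquivOfEq _ _ (by
    rw [← Submodule.ideal_span_singleton_smul, smul_eq_mul, Ideal.mul_top])
  have ht' : t ∈ nonZeroDivisors R := mem_nonZeroDivisors_iff_right.2 fun x hx =>
    ht.right_eq_zero_of_smul (by rwa [smul_eq_mul, mul_comm])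
  exact (isFiniteLength_quotient_span_singleton R ht').of_injective e.injective

variable [IsLocalRing R]

theorem mem_annihilator_residueField_iff {t : R} :
    t ∈ Module.annihilator R (ResidueField R) ↔ t ∈ maximalIdeal R :=
  SetLike.ext_iff.1 (Ideal.annihilator_quotient (I := maximalIdeal R)) t

theorem length_ext_one_residueField_le_one {t : R} (ht : IsSMulRegular R t)
    (htm : t ∈ maximalIdeal R) (hfl : IsFiniteLength R (QuotSMulTop t R))
    (h₂ : Subsingleton (Abelian.Ext (ModuleCat.of R (ResidueField R)) (ModuleCat.of R R) 2)) :
    Module.length R (Abelian.Ext (ModuleCat.of R (ResidueField R)) (ModuleCat.of R R) 1) ≤ 1 := by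
  have : Nontrivial (QuotSMulTop t R) := nontrivial_quotSMulTop_of_mem_maximalIdeal R htm
  have h₀ := subsingleton_ext_zero_of_mem_annihilator (Y := ModuleCat.of R R) ht
    (mem_annihilator_residueField_iff.2 htm)
  have hle := length_ext_one_quotSMulTop_le ht (ModuleCat.of R R)
  rw [length_ext_eq_mul hfl h₀ h₂] at hle
  rwa [← ENat.mul_le_mul_left_iff (Module.length_pos (R := R) (M := QuotSMulTop t R)).ne'
    (Module.length_ne_top_iff.2 hfl), mul_one]

theorem length_linearMap_residueField_quotSMulTop_le_one [Ring.KrullDimLE 1 R]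
    (hR : IsGorensteinLocalRing R) {t : R} (ht : IsSMulRegular R t) (htm : t ∈ maximalIdeal R) :
    Module.length R (ResidueField R →ₗ[R] QuotSMulTop t R) ≤ 1 := by
  obtain ⟨_, n, hn⟩ := hR
  have : Nontrivial (QuotSMulTop t R) := nontrivial_quotSMulTop_of_mem_maximalIdeal R htm
  have hfl := isFiniteLength_quotSMulTop ht
  have hvanish (i : ℕ) (hi : n < i) : Subsingleton
      (Abelian.Ext (ModuleCat.of R (ResidueField R)) (ModuleCat.of R R) i) := by
    obtain ⟨j, rfl⟩ := Nat.exists_eq_succ_of_ne_zero (Nat.ne_zero_of_lt hi)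
    exact subsingleton_abelianExt_of_subsingleton_ext R (hn _ hi)
  have hpd : HasProjectiveDimensionLT (ModuleCat.of R (QuotSMulTop t R)) 2 :=
    hasProjectiveDimensionLT_quotSMulTop (M := ModuleCat.of R R) ht
  have h₂ := subsingleton_ext_residueField_of_hasProjectiveDimensionLT hfl hvanish (le_refl 2)
  calc Module.length R (ResidueField R →ₗ[R] QuotSMulTop t R)
      ≤ Module.length R (Abelian.Ext (ModuleCat.of R (ResidueField R)) (ModuleCat.of R R) 1) :=
        length_linearMap_quotSMulTop_le (Y := ModuleCat.of R R) ht
          (mem_annihilator_residueField_iff.2 htm)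
    _ ≤ 1 := length_ext_one_residueField_le_one ht htm hfl h₂

end RegularElement

section Conductor

theorem exists_injective_quotient_range_quotSMulTop {R : Type*} [CommRing R] {N M : Type*}
    [AddCommGroup N] [Module R N] [AddCommGroup M] [Module R M]
    {ι : N →ₗ[R] M} (hι : Function.Injective ι) {t : R} (ht : IsSMulRegular M t)
    (hann : t ∈ Module.annihilator R (M ⧸ LinearMap.range ι)) :
    ∃ f : (M ⧸ LinearMap.range ι) →ₗ[R] QuotSMulTop t N, Function.Injective f := by
  have hmem (m : M) : t • m ∈ LinearMap.range ι := by
    rw [← Submodule.Quotient.mk_eq_zero, Submodule.Quotient.mk_smul]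
    exact Module.mem_annihilator.1 hann _
  let μ : M →ₗ[R] N := (LinearEquiv.ofInjective ι hι).symm.toLinearMap ∘ₗ
    (LinearMap.lsmul R M t).codRestrict (LinearMap.range ι) hmem
  have hμ (m : M) : ι (μ m) = t • m :=
    congrArg Subtype.val ((LinearEquiv.ofInjective ι hι).apply_symm_apply ⟨t • m, hmem m⟩)
  have hker (m : M) : μ m ∈ t • (⊤ : Submodule R N) ↔ m ∈ LinearMap.range ι := by
    simp only [Submodule.mem_smul_pointwise_iff_exists, LinearMap.mem_range,
      Submodule.mem_top, true_and, ← hι.eq_iff, hμ, map_smul, ht.eq_iff]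
  have hker_mkQ : LinearMap.ker ((t • (⊤ : Submodule R N)).mkQ ∘ₗ μ) = LinearMap.range ι := by
    rw [LinearMap.ker_comp, Submodule.ker_mkQ]
    exact Submodule.ext hker
  exact ⟨(LinearMap.range ι).liftQ ((t • (⊤ : Submodule R N)).mkQ ∘ₗ μ) hker_mkQ.ge,
    LinearMap.ker_eq_bot.1 (Submodule.ker_liftQ_eq_bot _ _ _ hker_mkQ.le)⟩

theorem exists_mem_annihilator_of_isTorsion' {R M : Type*} [CommRing R] [AddCommGroup M]
    [Module R M] [Module.Finite R M] {S : Submonoid R} (hM : Module.IsTorsion' M S) :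
    ∃ r ∈ S, r ∈ Module.annihilator R M := by
  classical
  obtain ⟨T, hT⟩ := ‹Module.Finite R M›.fg_top
  choose r hr using fun m => @hM m
  refine ⟨_, (∏ m ∈ T, r m : S).prop, ?_⟩
  rw [← Submodule.annihilator_top, ← hT, Submodule.mem_annihilator_span]
  rintro ⟨m, hm⟩
  rw [← Finset.prod_erase_mul _ _ hm, ← Submonoid.smul_def, mul_smul, hr, smul_zero]

/-- The conductor of a `B`-algebra `A`: the annihilator of the quotient of `A` by the image of `B`.
It is an ideal of `B`, so its extension to `A` is written `conductorIdeal B A • ⊤`. -/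
abbrev conductorIdeal (B A : Type*) [CommRing B] [Ring A] [Algebra B A] : Ideal B :=
  Module.annihilator B (A ⧸ LinearMap.range (Algebra.linearMap B A))

variable {B A : Type*} [CommRing B] [Ring A] [Algebra B A]

theorem mem_conductorIdeal {b : B} :
    b ∈ conductorIdeal B A ↔ ∀ a : A, b • a ∈ LinearMap.range (Algebra.linearMap B A) := by
  simp only [Module.mem_annihilator, (Submodule.mkQ_surjective _).forall, Submodule.mkQ_apply,
    ← Submodule.Quotient.mk_smul, Submodule.Quotient.mk_eq_zero]

theorem mul_mem_range_of_mem_conductorIdeal_smul_top {x : A}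
    (hx : x ∈ conductorIdeal B A • (⊤ : Submodule B A)) (a : A) :
    x * a ∈ LinearMap.range (Algebra.linearMap B A) := by
  refine Submodule.smul_induction_on hx (fun c hc y _ => ?_) fun x y hx hy => ?_
  · rw [smul_mul_assoc]
    exact mem_conductorIdeal.1 hc (y * a)
  · rw [add_mul]
    exact add_mem hx hy

theorem algebraMap_mem_conductorIdeal_smul_top_iff {b : B} :
    algebraMap B A b ∈ conductorIdeal B A • (⊤ : Submodule B A) ↔ b ∈ conductorIdeal B A := by
  refine ⟨fun hb => mem_conductorIdeal.2 fun a => ?_, fun hb => ?_⟩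
  · rw [Algebra.smul_def]
    exact mul_mem_range_of_mem_conductorIdeal_smul_top hb a
  · rw [Algebra.algebraMap_eq_smul_one]
    exact Submodule.smul_mem_smul hb Submodule.mem_top

variable (B A) in
theorem length_quotient_conductorIdeal_smul_top :
    Module.length B (A ⧸ conductorIdeal B A • (⊤ : Submodule B A)) =
      Module.length B (B ⧸ conductorIdeal B A) +
        Module.length B (A ⧸ LinearMap.range (Algebra.linearMap B A)) := by
  have hle : conductorIdeal B A • (⊤ : Submodule B A) ≤ LinearMap.range (Algebra.linearMap B A) :=
    fun x hx => mul_one x ▸ mul_mem_range_of_mem_conductorIdeal_smul_top hx 1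
  have hcomap : (conductorIdeal B A • (⊤ : Submodule B A)).comap (Algebra.linearMap B A) =
      conductorIdeal B A := Submodule.ext fun _ => algebraMap_mem_conductorIdeal_smul_top_iff
  refine Module.length_eq_add_of_exact
    (Submodule.mapQ (conductorIdeal B A) _ (Algebra.linearMap B A) hcomap.ge) (Submodule.factor hle)
    ?_ (Submodule.factor_surjective hle) ?_
  · rw [← LinearMap.ker_eq_bot, Submodule.ker_mapQ, hcomap, Submodule.mkQ_map_self]
  · rw [LinearMap.exact_iff, Submodule.range_mapQ]
    exact (Submodule.ker_mapQ _ _ _ hle).trans (by rw [Submodule.comap_id])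

end Conductor

theorem moduleLength_eq_length (R M : Type*) [CommRing R] [AddCommGroup M] [Module R M] :
    moduleLength R M = Module.length R M :=
  (Module.coe_length R M).symm

section Gorenstein

variable {B A : Type*} [CommRing B] [IsLocalRing B] [Ring A] [Algebra B A]
  [Module.Finite B A]

theorem exists_injective_quotient_range_quotSMulTop_of_isTorsion'
    (hinj : Function.Injective (algebraMap B A)) {s : B} (hs : s ∈ maximalIdeal B)
    (hregA : IsSMulRegular A s)
    (htorsion : Module.IsTorsion' (A ⧸ LinearMap.range (Algebra.linearMap B A))
      (Submonoid.powers s)) :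
    ∃ t ∈ maximalIdeal B, IsSMulRegular B t ∧
      ∃ f : (A ⧸ LinearMap.range (Algebra.linearMap B A)) →ₗ[B] QuotSMulTop t B,
        Function.Injective f := by
  obtain ⟨_, ⟨n, rfl⟩, hn⟩ := exists_mem_annihilator_of_isTorsion' htorsion
  have htA : IsSMulRegular A (s * s ^ n) := hregA.mul (hregA.pow n)
  exact ⟨s * s ^ n, Ideal.mul_mem_right _ _ hs, htA.of_injective (Algebra.linearMap B A) hinj,
    exists_injective_quotient_range_quotSMulTop (ι := Algebra.linearMap B A) hinj htA
      (Ideal.mul_mem_left _ s hn)⟩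

theorem length_quotient_conductorIdeal [Ring.KrullDimLE 1 B] (hB : IsGorensteinLocalRing B)
    (hinj : Function.Injective (algebraMap B A)) {s : B} (hs : s ∈ maximalIdeal B)
    (hregA : IsSMulRegular A s)
    (htorsion : Module.IsTorsion' (A ⧸ LinearMap.range (Algebra.linearMap B A))
      (Submonoid.powers s)) :
    IsFiniteLength B (A ⧸ LinearMap.range (Algebra.linearMap B A)) ∧
      Module.length B (B ⧸ conductorIdeal B A) =
        Module.length B (A ⧸ LinearMap.range (Algebra.linearMap B A)) := by
  have := hB.1
  obtain ⟨t, htm, ht, f, hf⟩ :=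
    exists_injective_quotient_range_quotSMulTop_of_isTorsion' hinj hs hregA htorsion
  have hfl := (isFiniteLength_quotSMulTop ht).of_injective hf
  have hsocle := (length_linearMap_le_of_injective (ResidueField B) hf).trans
    (length_linearMap_residueField_quotSMulTop_le_one hB ht htm)
  exact ⟨hfl, length_quotient_annihilator hfl hsocle⟩

end Gorenstein

theorem isTorsion'_quotient_range_linearMap {B A : Type*} [CommRing B] [Ring A] [Algebra B A]
    {s : B} (h : ∀ a : A, ∃ (n : ℕ) (b : B), (algebraMap B A s) ^ n * a = algebraMap B A b) :
    Module.IsTorsion' (A ⧸ LinearMap.range (Algebra.linearMap B A)) (Submonoid.powers s) := by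
  rintro ⟨a⟩
  obtain ⟨n, b, hb⟩ := h a
  refine ⟨⟨s ^ n, n, rfl⟩, (Submodule.Quotient.mk_eq_zero _).2 ⟨b, ?_⟩⟩
  rw [Algebra.linearMap_apply, ← hb, ← map_pow, ← Algebra.smul_def]

theorem conductor_length_formula_general (B A : Type*) [CommRing B] [IsLocalRing B]
    [Ring.KrullDimLE 1 B] (hGor : IsGorensteinLocalRing B)
    [Ring A] [Algebra B A] (hinj : Function.Injective (algebraMap B A))
    [Module.Finite B A]
    (s : B) (hs : s ∈ maximalIdeal B)
    (hregA : algebraMap B A s ∈ nonZeroDivisors A)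
    (hloc : ∀ a : A, ∃ (n : ℕ) (b : B), (algebraMap B A s) ^ n * a = algebraMap B A b) :
    ∃ n : ℕ,
      moduleLength B (B ⧸ conductorIdeal B A) = (n : ℕ∞) ∧
      moduleLength B (A ⧸ conductorIdeal B A • (⊤ : Submodule B A)) = ((2 * n : ℕ) : ℕ∞) := by
  have hreg : IsSMulRegular A s := fun x y hxy =>
    (mul_cancel_left_mem_nonZeroDivisors hregA).1 (by simpa only [Algebra.smul_def] using hxy)
  obtain ⟨hfl, hlength⟩ := length_quotient_conductorIdeal hGor hinj hs hreg
    (isTorsion'_quotient_range_linearMap hloc)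
  obtain ⟨n, hn⟩ := ENat.ne_top_iff_exists.1 (Module.length_ne_top_iff.2 hfl)
  refine ⟨n, ?_, ?_⟩
  · rw [moduleLength_eq_length, hlength, hn]
  · rw [moduleLength_eq_length, length_quotient_conductorIdeal_smul_top, hlength, ← hn, ← two_mul,
      Nat.cast_mul, Nat.cast_two]

/-- Let `B` be a complete one-dimensional local Noetherian Gorenstein ring,
`B ⊆ A` a finite ring extension with `A` a maximal Cohen–Macaulay `B`-module (the regular
parameter `s ∈ m_B` acts injectively on `A`) such that `B_s = A_s` for some regular element
`s` in the maximal ideal of `B` (so `A/B` has finite length).  Let `𝔠 = Ann_B(A/B)` be the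
conductor ideal.  Then `length_B(A/𝔠A) = 2·length_B(B/𝔠)`. -/
theorem conductor_length_formula (B A : Type*) [CommRing B] [IsLocalRing B]
    [IsNoetherianRing B] [IsAdicComplete (IsLocalRing.maximalIdeal B) B]
    (hdim : ringKrullDim B = 1) (hGor : IsGorensteinLocalRing B)
    [CommRing A] [Algebra B A] (hinj : Function.Injective (algebraMap B A))
    [Module.Finite B A]
    (s : B) (hs : s ∈ IsLocalRing.maximalIdeal B) (hreg : s ∈ nonZeroDivisors B)
    (hregA : algebraMap B A s ∈ nonZeroDivisors A)
    (hloc : ∀ a : A, ∃ (n : ℕ) (b : B), (algebraMap B A s) ^ n * a = algebraMap B A b) :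
    ∃ n : ℕ,
      moduleLength B (B ⧸ Module.annihilator B
        (A ⧸ LinearMap.range (Algebra.linearMap B A))) = (n : ℕ∞) ∧
      moduleLength B (A ⧸ ((Module.annihilator B
        (A ⧸ LinearMap.range (Algebra.linearMap B A))) • (⊤ : Submodule B A))) =
        ((2 * n : ℕ) : ℕ∞) := by
  have : Ring.KrullDimLE 1 B := Ring.krullDimLE_iff.2 hdim.le
  exact conductor_length_formula_general B A hGor hinj s hs hregA hloc
end
end
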